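/- Let f ∈ B_ℝ. Then for all sufficiently large M > 0, the set A := ⋃_{σ∈Σ(f)} σ·[M,∞) ⊂ ℝ satisfies A ⊂ I(f) and f(A) ⊂ A, where I(f) = {z ∈ ℂ : fⁿ(z) → ∞} is the escaping set of f. -/

import Mathlib

/-!
Formalization of: "Absence of wandering domains for functions in class B whose
singular values escape uniformly, under a thickness condition along an invariant set A."
-/

open Set Metric Filter Topology

/-- The chordal (spherical) distance between two finite points of the Riemann sphere. -/
noncomputable def sphericalDist (z w : ℂ) : ℝ :=
  2 * dist z w / (Real.sqrt (1 + ‖z‖ ^ 2) * Real.sqrt (1 + ‖w‖ ^ 2))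

/-- A transcendental entire function: entire and not a polynomial. -/
def TranscendentalEntire (f : ℂ → ℂ) : Prop :=
  Differentiable ℂ f ∧ ¬∃ p : Polynomial ℂ, ∀ z : ℂ, f z = p.eval z

/-- `S` is the set of singular values of `f`: the smallest closed set `S ⊆ ℂ` such that
`f : ℂ ∖ f⁻¹(S) → ℂ ∖ S` is a covering map. -/
def IsSingularValueSet (f : ℂ → ℂ) (S : Set ℂ) : Prop :=
  IsClosed S ∧ IsCoveringMapOn f Sᶜ ∧
    ∀ T : Set ℂ, IsClosed T → IsCoveringMapOn f Tᶜ → S ⊆ T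

/-- The Fatou set of an entire function: points having a neighbourhood on which the family of
iterates is equicontinuous with respect to the spherical metric. -/
def FatouSet (f : ℂ → ℂ) : Set ℂ :=
  {z : ℂ | ∃ N : Set ℂ, IsOpen N ∧ z ∈ N ∧
    ∀ x ∈ N, ∀ ε > (0 : ℝ), ∃ δ > (0 : ℝ), ∀ y ∈ N, dist y x < δ →
      ∀ n : ℕ, sphericalDist (f^[n] y) (f^[n] x) < ε}

/-- A wandering domain: a connected component `W` of the Fatou set whose forward images are
pairwise disjoint. -/
def IsWanderingDomain (f : ℂ → ℂ) (W : Set ℂ) : Prop :=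
  (∃ z ∈ FatouSet f, W = connectedComponentIn (FatouSet f) z) ∧
    ∀ m n : ℕ, m ≠ n → f^[m] '' W ∩ f^[n] '' W = ∅


/-- `σ ∈ Σ(f)`: there is a real singular value `s ∈ S(f) ∩ ℝ` and a sequence `n_j → ∞`
with `f^{n_j}(s) → σ·∞`. (Here `σ = ±1`.) -/
def MemSigma (f : ℂ → ℂ) (S : Set ℂ) (σ : ℝ) : Prop :=
  ∃ s ∈ S, s.im = 0 ∧ ∃ n : ℕ → ℕ, Tendsto n atTop atTop ∧
    Tendsto (fun j => σ * (f^[n j] s).re) atTop atTop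

/-- The escaping set `I(f)`. -/
def EscapingSet (f : ℂ → ℂ) : Set ℂ :=
  {z : ℂ | Tendsto (fun n => ‖f^[n] z‖) atTop atTop}

/-!
Suppose `f` is unbounded on `[0, ∞)`. From a point `x > 0` with `‖f x‖` large, lift `c * exp`, where
`c = f x`, through the covering `f` to a half-plane: this gives `φ` with `f ∘ φ = c * exp`.
It is injective, for otherwise it would be periodic and a neighbourhood of `∞` would be in its
image, so that `f` would be a polynomial. As `f` is real, `φ` commutes with conjugation; being
injective and positive on the real axis, it omits `(-∞, 0]`. By the Schwarz lemma for `√φ`, the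
modulus of `φ' / φ` is at most `4 / (t - b)` at `t`, where `b` is the edge of the half-plane. Hence
`φ` grows only polynomially while `f ∘ φ` grows exponentially: `x = o(f x)` as `x → ∞`.

Hence on each ray `f` is bounded or eventually at least doubles the modulus. If singular orbits
accumulate at an end, then their predecessors accumulate at an end that `f` maps to it. So `f`
permutes the at most two ends in `Σ(f)`, and doubling makes all points far out on them escape.
-/

section Lifting

variable {X E A : Type*} [TopologicalSpace X] [TopologicalSpace E] [TopologicalSpace A]
  {f : E → X} {s : Set X} {U : Set A}

theorem exists_continuousOn_lift_of_isCoveringMapOn [LocallyPathConnectedSpace A]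
    (hf : IsCoveringMapOn f s) (hU : IsOpen U) (hUs : IsSimplyConnected U)
    {g : A → X} (hg : ContinuousOn g U) (hs : MapsTo g U s)
    {a₀ : A} (ha₀ : a₀ ∈ U) {e₀ : E} (h₀ : f e₀ = g a₀) :
    ∃ φ : A → E, ContinuousOn φ U ∧ φ a₀ = e₀ ∧ EqOn (f ∘ φ) g U := by
  classical
  have := hUs.simplyConnectedSpace
  have := hU.locallyPathConnectedSpace
  obtain ⟨F, ⟨hF₀, hF⟩, -⟩ := hf.existsUnique_continuousMap_lifts ⟨U.domRestrict g, hg.domRestrict⟩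
    (a₀ := ⟨a₀, ha₀⟩) h₀ fun a ↦ hs a.2
  have hφ : ∀ a : U, Function.extend Subtype.val F (fun _ ↦ e₀) a = F a :=
    Subtype.val_injective.extend_apply F _
  refine ⟨Function.extend Subtype.val F fun _ ↦ e₀, ?_, (hφ ⟨a₀, ha₀⟩).trans hF₀, fun a ha ↦ ?_⟩
  · rw [continuousOn_iff_continuous_domRestrict]
    exact F.continuous.congr fun a ↦ (hφ a).symm
  · exact (congrArg f (hφ ⟨a, ha⟩)).trans (congrFun hF ⟨a, ha⟩)

end Lifting

section Holomorphy

variable {f φ g : ℂ → ℂ} {U : Set ℂ} {z : ℂ}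

theorem differentiableAt_of_comp_of_deriv_ne_zero (hf : Differentiable ℂ f)
    (hφ : ContinuousAt φ z) (hg : DifferentiableAt ℂ g z) (h : f ∘ φ =ᶠ[𝓝 z] g)
    (hd : deriv f (φ z) ≠ 0) : DifferentiableAt ℂ φ z := by
  have hs : HasStrictDerivAt f (deriv f (φ z)) (φ z) := (hf.analyticAt (φ z)).hasStrictDerivAt
  have hinv : DifferentiableAt ℂ (hs.localInverse f _ _ hd) (g z) :=
    h.self_of_nhds ▸ (hs.to_localInverse hd).hasDerivAt.differentiableAt
  refine (hinv.comp z hg).congr_of_eventuallyEq ?_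
  filter_upwards [hφ.eventually (hs.hasStrictFDerivAt_equiv hd).eventually_left_inverse, h]
    with w hw hwg
  exact hw.symm.trans (congrArg _ hwg)

theorem eventually_deriv_ne_zero_of_comp (hf : Differentiable ℂ f) (hφ : ContinuousAt φ z)
    (h : ∀ᶠ w in 𝓝[≠] z, f (φ w) ≠ f (φ z)) : ∀ᶠ w in 𝓝[≠] z, deriv f (φ w) ≠ 0 := by
  have hφz : Tendsto φ (𝓝[≠] z) (𝓝[≠] (φ z)) := tendsto_nhdsWithin_iff.mpr
    ⟨hφ.tendsto.mono_left nhdsWithin_le_nhds, h.mono fun w hw heq ↦ hw (congrArg f heq)⟩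
  refine hφz.eventually
    ((hf.analyticAt (φ z)).deriv.eventually_eq_zero_or_eventually_ne_zero.resolve_left ?_)
  intro hderiv
  have hderiv_eq : deriv f = 0 := AnalyticOnNhd.eq_of_eventuallyEq
    (fun w _ ↦ (hf.analyticAt w).deriv) analyticOnNhd_const hderiv
  obtain ⟨w, hw⟩ := h.exists
  exact hw (is_const_of_deriv_eq_zero hf (congrFun hderiv_eq) _ _)

theorem differentiableOn_of_comp_eqOn (hf : Differentiable ℂ f) (hU : IsOpen U)
    (hφ : ContinuousOn φ U) (hg : DifferentiableOn ℂ g U) (hg' : ∀ z ∈ U, deriv g z ≠ 0)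
    (h : EqOn (f ∘ φ) g U) : DifferentiableOn ℂ φ U := by
  intro z hz
  have hUz := hU.mem_nhds hz
  have hne : ∀ᶠ w in 𝓝[≠] z, f (φ w) ≠ f (φ z) := by
    filter_upwards [(hg.differentiableAt hUz).hasDerivAt.eventually_ne (c := g z) (hg' z hz),
      nhdsWithin_le_nhds hUz] with w hw hwU
    exact fun heq ↦ hw ((h hwU).symm.trans (heq.trans (h hz)))
  refine (Complex.analyticAt_of_differentiable_on_punctured_nhds_of_continuousAt ?_
    (hφ.continuousAt hUz)).differentiableAt.differentiableWithinAt
  filter_upwards [eventually_deriv_ne_zero_of_comp hf (hφ.continuousAt hUz) hne,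
    nhdsWithin_le_nhds hUz] with w hw hwU
  have hUw := hU.mem_nhds hwU
  exact differentiableAt_of_comp_of_deriv_ne_zero hf (hφ.continuousAt hUw)
    (hg.differentiableAt hUw) (h.eventuallyEq_of_mem hUw) hw

end Holomorphy

section EntireAtInfinity

open Bornology

variable {f : ℂ → ℂ}

theorem iteratedDeriv_eq_zero_of_isBigO_cobounded (hf : Differentiable ℂ f) {n m : ℕ}
    (h : f =O[cobounded ℂ] fun z ↦ z ^ n) (hnm : n < m) : iteratedDeriv m f 0 = 0 := by
  obtain ⟨C, hC⟩ := h.bound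
  obtain ⟨ρ, -, hρ⟩ := hasBasis_cobounded_norm.eventually_iff.mp hC
  have hcauchy : ∀ᶠ r : ℝ in atTop, ‖iteratedDeriv m f 0‖ ≤ m.factorial * C * (r ^ n / r ^ m) := by
    filter_upwards [eventually_gt_atTop 0, eventually_ge_atTop ρ] with r hr hρr
    refine (Complex.norm_iteratedDeriv_le_of_forall_mem_sphere_norm_le m hr hf.diffContOnCl
      (C := C * r ^ n) fun z hz ↦ ?_).trans_eq (by ring)
    have hzr : ‖z‖ = r := by simpa using hz
    simpa [hzr] using hρ (show ρ ≤ ‖z‖ from hzr ▸ hρr)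
  have hlim : Tendsto (fun r : ℝ ↦ m.factorial * C * (r ^ n / r ^ m)) atTop (𝓝 0) := by
    simpa using (tendsto_pow_div_pow_atTop_zero hnm).const_mul (m.factorial * C)
  exact norm_le_zero_iff.mp (ge_of_tendsto hlim hcauchy)

theorem exists_polynomial_of_isBigO_cobounded (hf : Differentiable ℂ f) {n : ℕ}
    (h : f =O[cobounded ℂ] fun z ↦ z ^ n) : ∃ p : Polynomial ℂ, ∀ z, f z = p.eval z := by
  refine ⟨∑ m ∈ Finset.range (n + 1),
    Polynomial.C ((m.factorial : ℂ)⁻¹ * iteratedDeriv m f 0) * Polynomial.X ^ m, fun z ↦ ?_⟩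
  rw [← Complex.taylorSeries_eq_of_entire' 0 z hf, tsum_eq_sum (s := Finset.range (n + 1))]
  · simp [Polynomial.eval_finsetSum]
  · intro m hm
    simp [iteratedDeriv_eq_zero_of_isBigO_cobounded hf h (m := m) (by simpa using hm)]

theorem exists_polynomial_of_meromorphicAt_inv (hf : Differentiable ℂ f)
    (h : MeromorphicAt (fun u ↦ f u⁻¹) 0) : ∃ p : Polynomial ℂ, ∀ z, f z = p.eval z := by
  obtain ⟨n, hn⟩ := h
  refine exists_polynomial_of_isBigO_cobounded hf (n := n) ?_
  have hbdd : (fun z : ℂ ↦ (z⁻¹ ^ n) * f z) =O[cobounded ℂ] fun _ ↦ (1 : ℂ) := by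
    have := (hn.continuousAt.isBigO_one ℂ).comp_tendsto tendsto_inv₀_cobounded
    simpa [Function.comp_def] using this
  refine ((Asymptotics.isBigO_refl (fun z : ℂ ↦ z ^ n) _).mul hbdd).congr' ?_ (by simp)
  filter_upwards [eventually_ne_cobounded 0] with z hz
  rw [← mul_assoc, ← mul_pow, mul_inv_cancel₀ hz, one_pow, one_mul]

theorem meromorphicAt_of_differentiable_of_isBoundedUnder {c : ℂ}
    (hd : ∀ᶠ z in 𝓝[≠] c, DifferentiableAt ℂ f z)
    (hb : IsBoundedUnder (· ≤ ·) (𝓝[≠] c) fun z ↦ ‖f z - f c‖) : MeromorphicAt f c := by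
  have hlim := Complex.tendsto_limUnder_of_differentiable_on_punctured_nhds_of_bounded_under hd hb
  have hupd : ∀ z ≠ c, Function.update f c (limUnder (𝓝[≠] c) f) =ᶠ[𝓝 z] f := fun z hz ↦
    (isOpen_ne.eventually_mem hz).mono fun w hw ↦ Function.update_of_ne hw _ _
  refine (Complex.analyticAt_of_differentiable_on_punctured_nhds_of_continuousAt ?_
    (continuousAt_update_same.mpr hlim)).meromorphicAt.congr ?_
  · filter_upwards [hd, self_mem_nhdsWithin] with z hz hzc
    exact hz.congr_of_eventuallyEq (hupd z hzc)
  · filter_upwards [self_mem_nhdsWithin] with z hzc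
    exact (hupd z hzc).self_of_nhds

theorem exists_polynomial_of_eventually_le_norm (hf : Differentiable ℂ f) {c : ℝ} (hc : 0 < c)
    (h : ∀ᶠ z in cobounded ℂ, c ≤ ‖f z‖) : ∃ p : Polynomial ℂ, ∀ z, f z = p.eval z := by
  have hinv : ∀ᶠ u in 𝓝[≠] (0 : ℂ), c ≤ ‖f u⁻¹‖ := tendsto_inv₀_nhdsNE_zero.eventually h
  have hmero : MeromorphicAt (fun u ↦ (f u⁻¹)⁻¹) 0 := by
    refine meromorphicAt_of_differentiable_of_isBoundedUnder ?_
      (isBoundedUnder_of_eventually_le (a := c⁻¹ + ‖(f 0⁻¹)⁻¹‖) ?_)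
    · filter_upwards [hinv, self_mem_nhdsWithin] with u hu hu0
      exact ((hf _).comp u (differentiableAt_inv hu0)).inv (norm_pos_iff.mp (hc.trans_le hu))
    · filter_upwards [hinv] with u hu
      refine (norm_sub_le _ _).trans (add_le_add_left ?_ _)
      exact (norm_inv (f u⁻¹)).trans_le (inv_anti₀ hc hu)
  exact exists_polynomial_of_meromorphicAt_inv hf (hmero.inv.congr (by simp [EventuallyEq]))

end EntireAtInfinity

open scoped ComplexConjugate

section Schwarz

variable {φ q : ℂ → ℂ} {c : ℂ} {r : ℝ}

theorem norm_sub_le_norm_add_conj {z w : ℂ} (hz : 0 ≤ z.re) (hw : 0 ≤ w.re) :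
    ‖z - w‖ ≤ ‖z + conj w‖ := by
  rw [← sq_le_sq₀ (norm_nonneg _) (norm_nonneg _), Complex.sq_norm, Complex.sq_norm,
    Complex.normSq_apply, Complex.normSq_apply]
  simp only [Complex.sub_re, Complex.sub_im, Complex.add_re, Complex.add_im, Complex.conj_re,
    Complex.conj_im]
  nlinarith [mul_nonneg hz hw]

theorem norm_deriv_le_of_re_pos (hr : 0 < r) (hq : DifferentiableOn ℂ q (ball c r))
    (hpos : ∀ z ∈ ball c r, 0 < (q z).re) : ‖deriv q c‖ ≤ 2 * (q c).re / r := by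
  have hc : c ∈ ball c r := mem_ball_self hr
  have hadd : q c + conj (q c) = (2 * (q c).re : ℝ) := by simpa using Complex.add_conj (q c)
  have hne : ∀ z ∈ ball c r, q z + conj (q c) ≠ 0 := fun z hz h0 ↦ by
    have hre := congrArg Complex.re h0
    simp only [Complex.add_re, Complex.conj_re, Complex.zero_re] at hre
    linarith [hpos z hz, hpos c hc]
  have hqc : HasDerivAt q (deriv q c) c :=
    (hq.differentiableAt (isOpen_ball.mem_nhds hc)).hasDerivAt
  have hcayley : deriv (fun z ↦ (q z - q c) / (q z + conj (q c))) c
      = deriv q c / (2 * (q c).re : ℝ) := by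
    refine ((hqc.sub_const (q c)).div (hqc.add_const (conj (q c))) (hne c hc)).deriv.trans ?_
    rw [sub_self, zero_mul, sub_zero, sq, mul_div_mul_right _ _ (hne c hc), hadd]
  have hschwarz : ‖deriv (fun z ↦ (q z - q c) / (q z + conj (q c))) c‖ ≤ 1 / r := by
    refine Complex.norm_deriv_le_div_of_mapsTo_ball
      ((hq.sub_const _).div (hq.add_const _) hne) (fun z hz ↦ ?_) hr
    rw [sub_self, zero_div, mem_closedBall_zero_iff, norm_div]
    exact div_le_one_of_le₀ (norm_sub_le_norm_add_conj (hpos z hz).le (hpos c hc).le)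
      (norm_nonneg _)
  have h2 : 0 < 2 * (q c).re := mul_pos two_pos (hpos c hc)
  rwa [hcayley, norm_div, Complex.norm_of_nonneg h2.le, div_le_div_iff₀ h2 hr, one_mul,
    ← le_div_iff₀ hr] at hschwarz

theorem complexSqrt_sq (z : ℂ) : z.sqrt ^ 2 = z :=
  Complex.cpow_ofNat_inv_pow z 2

theorem re_complexSqrt_pos {z : ℂ} (hz : z ∈ Complex.slitPlane) : 0 < z.sqrt.re := by
  obtain ⟨harg, hz0⟩ := Complex.mem_slitPlane_iff_arg.mp hz
  rw [sqrt_eq_exp hz0, Complex.exp_re, Complex.div_ofNat_im, Complex.log_im]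
  refine mul_pos (Real.exp_pos _) (Real.cos_pos_of_mem_Ioo ?_)
  constructor <;> linarith [Complex.neg_pi_lt_arg z, (Complex.arg_le_pi z).lt_of_ne harg]

theorem norm_deriv_le_of_mapsTo_slitPlane (hr : 0 < r) (hφ : DifferentiableOn ℂ φ (ball c r))
    (hs : MapsTo φ (ball c r) Complex.slitPlane) : ‖deriv φ c‖ ≤ 4 * ‖φ c‖ / r := by
  have hc : c ∈ ball c r := mem_ball_self hr
  have hq : DifferentiableOn ℂ (fun z ↦ (φ z).sqrt) (ball c r) :=
    Complex.differentiableOn_sqrt.comp hφ hs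
  have hsq : φ = fun z ↦ (φ z).sqrt ^ 2 := funext fun z ↦ (complexSqrt_sq _).symm
  have hderiv : deriv φ c = 2 * (φ c).sqrt * deriv (fun z ↦ (φ z).sqrt) c := by
    conv_lhs => rw [hsq]
    rw [deriv_fun_pow (hq.differentiableAt (isOpen_ball.mem_nhds hc))]
    simp
  have hsqrt := norm_deriv_le_of_re_pos hr hq fun z hz ↦ re_complexSqrt_pos (hs hz)
  have hre := Complex.re_le_norm (φ c).sqrt
  calc ‖deriv φ c‖ = 2 * ‖(φ c).sqrt‖ * ‖deriv (fun z ↦ (φ z).sqrt) c‖ := by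
        rw [hderiv, norm_mul, norm_mul, Complex.norm_ofNat]
    _ ≤ 2 * ‖(φ c).sqrt‖ * (2 * ‖(φ c).sqrt‖ / r) := by gcongr; exact hsqrt.trans (by gcongr)
    _ = 4 * ‖(φ c).sqrt ^ 2‖ / r := by rw [norm_pow]; ring
    _ = 4 * ‖φ c‖ / r := by rw [complexSqrt_sq]

end Schwarz

theorem apply_conj_of_real {f : ℂ → ℂ} (hf : Differentiable ℂ f)
    (hreal : ∀ x : ℝ, (f x).im = 0) (z : ℂ) : f (conj z) = conj (f z) := by
  have hconj : Differentiable ℂ (conj ∘ f ∘ conj) := fun z ↦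
    differentiableAt_conj_conj_iff.mpr (hf _)
  have hofReal : Tendsto (fun x : ℝ ↦ (x : ℂ)) (𝓝[≠] 0) (𝓝[≠] 0) :=
    Complex.ofRealCLM.hasDerivAt.tendsto_nhdsNE one_ne_zero
  have hfreq : ∃ᶠ z in 𝓝[≠] (0 : ℂ), f z = (conj ∘ f ∘ conj) z := by
    refine hofReal.frequently (Frequently.of_forall fun x ↦ ?_)
    simpa using (Complex.conj_eq_iff_im.mpr (hreal x)).symm
  have heq := AnalyticOnNhd.eq_of_frequently_eq (fun z _ ↦ hf.analyticAt z)
    (fun z _ ↦ hconj.analyticAt z) hfreq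
  simpa using congrFun heq (conj z)

section LogInverse

open Bornology

/-- The open right half-plane `{z | b < Re z}`. -/
def rightHalfPlane (b : ℝ) : Set ℂ := {z | b < z.re}

/-- `φ` is a branch of `f⁻¹` in the logarithmic coordinate of Eremenko and Lyubich: it is
continuous on the half-plane `{b < Re z}`, where `f ∘ φ` is `c * exp`. -/
structure IsLogInverse (f : ℂ → ℂ) (c : ℂ) (b : ℝ) (φ : ℂ → ℂ) : Prop where
  ne_zero : c ≠ 0
  continuousOn : ContinuousOn φ (rightHalfPlane b)
  comp_eqOn : EqOn (f ∘ φ) (fun z ↦ c * Complex.exp z) (rightHalfPlane b)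

variable {f φ ψ : ℂ → ℂ} {a b : ℝ} {c z w : ℂ}

theorem isOpen_rightHalfPlane (b : ℝ) : IsOpen (rightHalfPlane b) :=
  isOpen_lt continuous_const Complex.continuous_re

theorem convex_rightHalfPlane (b : ℝ) : Convex ℝ (rightHalfPlane b) :=
  convex_halfSpace_re_gt b

theorem ofReal_mem_rightHalfPlane {t : ℝ} : (t : ℂ) ∈ rightHalfPlane b ↔ b < t :=
  Iff.rfl

theorem isSimplyConnected_rightHalfPlane (b : ℝ) : IsSimplyConnected (rightHalfPlane b) := by
  have : ContractibleSpace (rightHalfPlane b) := (convex_rightHalfPlane b).contractibleSpace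
    ⟨(b + 1 : ℝ), ofReal_mem_rightHalfPlane.mpr (lt_add_one b)⟩
  exact (inferInstance : SimplyConnectedSpace (rightHalfPlane b))

theorem exp_image_rightHalfPlane {ρ : ℝ} (hρ : 0 < ρ) :
    Complex.exp '' rightHalfPlane (Real.log ρ) = {z | ρ < ‖z‖} := by
  refine Subset.antisymm ?_ fun z hz ↦ ?_
  · rintro _ ⟨w, hw, rfl⟩
    exact ((Real.log_lt_iff_lt_exp hρ).mp hw).trans_eq (Complex.norm_exp w).symm
  · have hlog : Real.log ρ < (Complex.log z).re :=
      (Real.log_lt_log hρ hz).trans_eq (Complex.log_re z).symm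
    exact ⟨Complex.log z, hlog, Complex.exp_log (norm_pos_iff.mp (hρ.trans hz))⟩

theorem isPreconnected_setOf_lt_norm {ρ : ℝ} (hρ : 0 < ρ) : IsPreconnected {z : ℂ | ρ < ‖z‖} :=
  exp_image_rightHalfPlane hρ ▸
    (convex_rightHalfPlane _).isPreconnected.image _ Complex.continuous_exp.continuousOn

theorem tendsto_cobounded_of_comp {ι X Y : Type*} [PseudoMetricSpace X] [ProperSpace X]
    [PseudoMetricSpace Y] [ProperSpace Y] {f : X → Y} (hf : Continuous f) {u : ι → X}
    {l : Filter ι} (h : Tendsto (f ∘ u) l (cobounded Y)) : Tendsto u l (cobounded X) := by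
  rw [Metric.cobounded_eq_cocompact] at h ⊢
  exact (tendsto_comap_iff.mpr h).mono_right (comap_cocompact_le hf)

theorem exists_isLogInverse {R : ℝ} (hf : IsCoveringMapOn f {w | R < ‖w‖}) {x : ℂ} (hx : f x ≠ 0)
    (hb : b < 0) (hR : R ≤ ‖f x‖ * Real.exp b) : ∃ φ, IsLogInverse f (f x) b φ ∧ φ 0 = x := by
  have hmaps : MapsTo (fun z ↦ f x * Complex.exp z) (rightHalfPlane b) {w | R < ‖w‖} := by
    intro z (hz : b < z.re)
    change R < ‖f x * Complex.exp z‖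
    rw [norm_mul, Complex.norm_exp]
    exact hR.trans_lt (by gcongr)
  obtain ⟨φ, hφ, hφ0, hcomp⟩ := exists_continuousOn_lift_of_isCoveringMapOn hf
    (isOpen_rightHalfPlane b) (isSimplyConnected_rightHalfPlane b) (by fun_prop) hmaps
    (a₀ := 0) (e₀ := x) hb (by simp)
  exact ⟨φ, ⟨hx, hφ, hcomp⟩, hφ0⟩

namespace IsLogInverse

theorem norm_apply (hφ : IsLogInverse f c b φ) (hz : z ∈ rightHalfPlane b) :
    ‖f (φ z)‖ = ‖c‖ * Real.exp z.re := by
  rw [← Complex.norm_exp, ← norm_mul]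
  exact congrArg norm (hφ.comp_eqOn hz)

theorem re_eq_of_apply_eq (hφ : IsLogInverse f c b φ) (hz : z ∈ rightHalfPlane b)
    (hw : w ∈ rightHalfPlane b) (h : φ z = φ w) : z.re = w.re := by
  have hexp : ‖c‖ * Real.exp z.re = ‖c‖ * Real.exp w.re := by
    rw [← hφ.norm_apply hz, ← hφ.norm_apply hw, h]
  exact Real.exp_injective (mul_left_cancel₀ (norm_ne_zero_iff.mpr hφ.ne_zero) hexp)

theorem tendsto_cobounded (hφ : IsLogInverse f c b φ) (hf : Continuous f) :
    Tendsto (fun t : ℝ ↦ φ t) atTop (cobounded ℂ) := by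
  refine tendsto_cobounded_of_comp hf (tendsto_norm_atTop_iff_cobounded.mp ?_)
  refine (Real.tendsto_exp_atTop.const_mul_atTop (norm_pos_iff.mpr hφ.ne_zero)).congr' ?_
  filter_upwards [eventually_gt_atTop b] with t ht
  exact (hφ.norm_apply (ofReal_mem_rightHalfPlane.mpr ht)).symm

theorem differentiableOn (hφ : IsLogInverse f c b φ) (hf : Differentiable ℂ f) :
    DifferentiableOn ℂ φ (rightHalfPlane b) := by
  refine differentiableOn_of_comp_eqOn hf (isOpen_rightHalfPlane b) hφ.continuousOn
    (by fun_prop) (fun z _ ↦ ?_) hφ.comp_eqOn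
  rw [((Complex.hasDerivAt_exp z).const_mul c).deriv]
  exact mul_ne_zero hφ.ne_zero (Complex.exp_ne_zero z)

theorem deriv_apply_ne_zero (hφ : IsLogInverse f c b φ) (hf : Differentiable ℂ f)
    (hz : z ∈ rightHalfPlane b) : deriv f (φ z) ≠ 0 := by
  have hUz := (isOpen_rightHalfPlane b).mem_nhds hz
  have hderiv : deriv f (φ z) * deriv φ z = c * Complex.exp z := by
    rw [← deriv_comp z (hf _) ((hφ.differentiableOn hf).differentiableAt hUz),
      (hφ.comp_eqOn.eventuallyEq_of_mem hUz).deriv_eq,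
      ((Complex.hasDerivAt_exp z).const_mul c).deriv]
  exact left_ne_zero_of_mul (hderiv ▸ mul_ne_zero hφ.ne_zero (Complex.exp_ne_zero z))

theorem eqOn (hφ : IsLogInverse f c b φ) (hψ : IsLogInverse f c b ψ) (hf : Differentiable ℂ f)
    (hz : z ∈ rightHalfPlane b) (h : φ z = ψ z) : EqOn φ ψ (rightHalfPlane b) := by
  have hU := isOpen_rightHalfPlane b
  have hUz := hU.mem_nhds hz
  refine ((hφ.differentiableOn hf).analyticOnNhd hU).eqOn_of_preconnected_of_eventuallyEq
    ((hψ.differentiableOn hf).analyticOnNhd hU) (convex_rightHalfPlane b).isPreconnected hz ?_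
  have hinv := ((hf.analyticAt (φ z)).hasStrictDerivAt.hasStrictFDerivAt_equiv
    (hφ.deriv_apply_ne_zero hf hz)).eventually_left_inverse
  have hψz : Tendsto ψ (𝓝 z) (𝓝 (φ z)) := h ▸ (hψ.continuousOn.continuousAt hUz).tendsto
  filter_upwards [(hφ.continuousOn.continuousAt hUz).eventually hinv, hψz.eventually hinv, hUz]
    with w hφw hψw hw
  rw [← hφw, ← hψw, show f (φ w) = f (ψ w) from (hφ.comp_eqOn hw).trans (hψ.comp_eqOn hw).symm]

theorem apply_conj (hφ : IsLogInverse f c b φ) (hf : Differentiable ℂ f)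
    (hreal : ∀ x : ℝ, (f x).im = 0) (hc : conj c = c) {x : ℝ} (hx : b < x)
    (hφx : conj (φ x) = φ x) (hz : z ∈ rightHalfPlane b) : φ (conj z) = conj (φ z) := by
  have hconj : MapsTo conj (rightHalfPlane b) (rightHalfPlane b) := fun z hz ↦ hz
  have hψ : IsLogInverse f c b (conj ∘ φ ∘ conj) := by
    refine ⟨hφ.ne_zero, Complex.continuous_conj.comp_continuousOn
      (hφ.continuousOn.comp Complex.continuous_conj.continuousOn hconj), fun z hz ↦ ?_⟩
    have hφz : f (φ (conj z)) = c * Complex.exp (conj z) := hφ.comp_eqOn (hconj hz)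
    simp only [Function.comp_apply]
    rw [apply_conj_of_real hf hreal, hφz, map_mul, hc, ← Complex.exp_conj, Complex.conj_conj]
  have heq := hφ.eqOn hψ hf (ofReal_mem_rightHalfPlane.mpr hx) (by simp [hφx]) (hconj hz)
  simpa using heq

theorem apply_add_sub (hφ : IsLogInverse f c b φ) (hf : Differentiable ℂ f)
    (hz : z ∈ rightHalfPlane b) (hw : w ∈ rightHalfPlane b) (h : φ z = φ w) {u : ℂ}
    (hu : u ∈ rightHalfPlane b) : φ (u + (w - z)) = φ u := by
  have hexp : Complex.exp (w - z) = 1 := by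
    rw [Complex.exp_sub, div_eq_one_iff_eq (Complex.exp_ne_zero z)]
    refine mul_left_cancel₀ hφ.ne_zero ?_
    exact (hφ.comp_eqOn hw).symm.trans ((congrArg f h).symm.trans (hφ.comp_eqOn hz))
  have hre : (w - z).re = 0 := by
    rw [Complex.sub_re, hφ.re_eq_of_apply_eq hz hw h, sub_self]
  have hmaps : MapsTo (· + (w - z)) (rightHalfPlane b) (rightHalfPlane b) := fun v (hv : b < v.re) ↦
    show b < (v + (w - z)).re by rwa [Complex.add_re, hre, add_zero]
  have hψ : IsLogInverse f c b (φ ∘ (· + (w - z))) := by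
    refine ⟨hφ.ne_zero, hφ.continuousOn.comp (by fun_prop) hmaps, fun v hv ↦ ?_⟩
    refine (hφ.comp_eqOn (hmaps hv)).trans ?_
    simp only [Complex.exp_add, hexp, mul_one]
  exact hψ.eqOn hφ hf hz (by simp [h]) hu

theorem isOpen_image (hφ : IsLogInverse f c b φ) (hf : Differentiable ℂ f) {U : Set ℂ}
    (hU : IsOpen U) (hUb : U ⊆ rightHalfPlane b) : IsOpen (φ '' U) := by
  rcases ((hφ.differentiableOn hf).analyticOnNhd (isOpen_rightHalfPlane b)).is_constant_or_isOpen
    (convex_rightHalfPlane b).isPreconnected with ⟨v, hv⟩ | hopen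
  · have hb1 : ((b + 1 : ℝ) : ℂ) ∈ rightHalfPlane b := ofReal_mem_rightHalfPlane.mpr (lt_add_one b)
    have hb2 : ((b + 2 : ℝ) : ℂ) ∈ rightHalfPlane b :=
      ofReal_mem_rightHalfPlane.mpr (lt_add_of_pos_right b two_pos)
    have hre := hφ.re_eq_of_apply_eq hb1 hb2 ((hv _ hb1).trans (hv _ hb2).symm)
    simp at hre
  · exact hopen U hUb hU

end IsLogInverse

theorem image_reProdIm_univ_of_periodic {E : Type*} {φ : ℂ → E} {s : Set ℝ} {T : ℝ} (hT : 0 < T)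
    (hper : ∀ x ∈ s, Function.Periodic (fun y : ℝ ↦ φ ⟨x, y⟩) T) :
    φ '' (s ×ℂ univ) = φ '' (s ×ℂ Icc 0 T) := by
  refine Subset.antisymm ?_ (image_mono fun z hz ↦ ⟨hz.1, mem_univ _⟩)
  rintro _ ⟨z, ⟨hz, -⟩, rfl⟩
  obtain ⟨y, hy, hφy⟩ := (hper z.re hz).exists_mem_Ico₀ hT z.im
  exact ⟨⟨z.re, y⟩, ⟨hz, Ico_subset_Icc_self hy⟩, hφy.symm⟩

namespace IsLogInverse

theorem isCompact_image_of_periodic (hφ : IsLogInverse f c b φ) {T : ℝ} (hT : 0 < T)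
    (hper : ∀ x > b, Function.Periodic (fun y : ℝ ↦ φ ⟨x, y⟩) T)
    {K : Set ℝ} (hK : IsCompact K) (hKb : K ⊆ Ioi b) :
    IsCompact (φ '' (K ×ℂ univ)) := by
  rw [image_reProdIm_univ_of_periodic hT fun x hx ↦ hper x (hKb hx)]
  exact (hK.reProdIm isCompact_Icc).image_of_continuousOn
    (hφ.continuousOn.mono fun z hz ↦ hKb hz.1)

theorem isClosed_image_of_periodic (hφ : IsLogInverse f c b φ) {T : ℝ} (hT : 0 < T)
    (hper : ∀ x > b, Function.Periodic (fun y : ℝ ↦ φ ⟨x, y⟩) T)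
    (hf : Continuous f) (hab : b < a) :
    IsClosed (φ '' (Ici a ×ℂ univ)) := by
  refine isClosed_of_closure_subset fun z hz ↦ ?_
  obtain ⟨B, hB⟩ := (Real.tendsto_exp_atTop.const_mul_atTop
    (norm_pos_iff.mpr hφ.ne_zero)).eventually_gt_atTop (‖f z‖ + 1) |>.exists_forall_of_atTop
  have hN : IsOpen {w | ‖f w‖ < ‖f z‖ + 1} := isOpen_lt hf.norm continuous_const
  have hsub : {w | ‖f w‖ < ‖f z‖ + 1} ∩ φ '' (Ici a ×ℂ univ) ⊆ φ '' (Icc a B ×ℂ univ) := by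
    rintro _ ⟨hw, ζ, hζ, rfl⟩
    refine mem_image_of_mem φ ⟨⟨hζ.1, le_of_not_ge fun hBζ ↦ (hB _ hBζ).not_gt ?_⟩, hζ.2⟩
    exact (hφ.norm_apply (hab.trans_le hζ.1)).symm.trans_lt hw
  have hclosed : IsClosed (φ '' (Icc a B ×ℂ univ)) :=
    (hφ.isCompact_image_of_periodic hT hper isCompact_Icc fun x hx ↦ hab.trans_le hx.1).isClosed
  have hz' := hN.inter_closure ⟨lt_add_one ‖f z‖, hz⟩
  refine image_mono ?_ (hclosed.closure_subset_iff.mpr hsub hz')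
  exact fun ζ hζ ↦ ⟨hζ.1.1, hζ.2⟩

theorem eventually_mem_image_of_periodic (hφ : IsLogInverse f c b φ) {T : ℝ} (hT : 0 < T)
    (hper : ∀ x > b, Function.Periodic (fun y : ℝ ↦ φ ⟨x, y⟩) T)
    (hf : Differentiable ℂ f) (hab : b < a) :
    ∀ᶠ z in cobounded ℂ, z ∈ φ '' rightHalfPlane a := by
  obtain ⟨ρ, hρ0, hρ⟩ := (hφ.isCompact_image_of_periodic hT hper isCompact_singleton
    (singleton_subset_iff.mpr hab)).isBounded.exists_pos_norm_le
  refine ((tendsto_norm_cobounded_atTop.eventually_gt_atTop ρ).mono fun z hz ↦ ?_)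
  have hopen : IsOpen (φ '' rightHalfPlane a) :=
    hφ.isOpen_image hf (isOpen_rightHalfPlane a) fun z hz ↦ hab.trans hz
  refine (isPreconnected_setOf_lt_norm hρ0).subset_of_closure_inter_subset hopen ?_ ?_ hz
  · obtain ⟨t, hta, htρ⟩ := ((eventually_gt_atTop a).and ((tendsto_norm_cobounded_atTop.comp
      (hφ.tendsto_cobounded hf.continuous)).eventually_gt_atTop ρ)).exists
    exact ⟨φ t, htρ, mem_image_of_mem φ hta⟩
  · rintro w ⟨hw, hwρ⟩
    have hsub : rightHalfPlane a ⊆ Ici a ×ℂ univ := fun ζ (hζ : a < ζ.re) ↦ ⟨hζ.le, mem_univ _⟩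
    obtain ⟨ζ, hζ, rfl⟩ := closure_minimal (image_mono hsub)
      (hφ.isClosed_image_of_periodic hT hper hf.continuous hab) hw
    rcases eq_or_lt_of_le (show a ≤ ζ.re from hζ.1) with heq | hlt
    · exact absurd (hρ _ (mem_image_of_mem φ ⟨heq.symm, hζ.2⟩)) (not_le.mpr hwρ)
    · exact mem_image_of_mem φ hlt

theorem not_im_lt_of_apply_eq (hφ : IsLogInverse f c b φ) (hf : TranscendentalEntire f)
    (hz : z ∈ rightHalfPlane b) (hw : w ∈ rightHalfPlane b) (h : φ z = φ w) : ¬z.im < w.im := by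
  intro hlt
  have hre : z.re = w.re := hφ.re_eq_of_apply_eq hz hw h
  have hper : ∀ x > b, Function.Periodic (fun y : ℝ ↦ φ ⟨x, y⟩) (w.im - z.im) := by
    intro x hx y
    refine Eq.trans (congrArg φ ?_) (hφ.apply_add_sub hf.1 hz hw h (u := ⟨x, y⟩) hx)
    exact Complex.ext (by simp [hre]) (by simp)
  refine hf.2 (exists_polynomial_of_eventually_le_norm hf.1
    (mul_pos (norm_pos_iff.mpr hφ.ne_zero) (Real.exp_pos b)) ?_)
  filter_upwards [hφ.eventually_mem_image_of_periodic (sub_pos.mpr hlt) hper hf.1 (lt_add_one b)]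
  rintro _ ⟨ζ, hζ, rfl⟩
  have hζb : b < ζ.re := (lt_add_one b).trans hζ
  rw [hφ.norm_apply hζb]
  gcongr

theorem injOn (hφ : IsLogInverse f c b φ) (hf : TranscendentalEntire f) :
    InjOn φ (rightHalfPlane b) := by
  intro z hz w hw h
  have hre : z.re = w.re := hφ.re_eq_of_apply_eq hz hw h
  refine Complex.ext hre (le_antisymm ?_ ?_) <;> by_contra! hlt
  · exact hφ.not_im_lt_of_apply_eq hf hw hz h.symm hlt
  · exact hφ.not_im_lt_of_apply_eq hf hz hw h hlt

theorem mapsTo_slitPlane (hφ : IsLogInverse f c b φ) (hf : TranscendentalEntire f)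
    (hconj : ∀ z ∈ rightHalfPlane b, φ (conj z) = conj (φ z))
    (hpos : ∀ t > b, 0 < (φ (t : ℝ)).re) : MapsTo φ (rightHalfPlane b) Complex.slitPlane := by
  intro z hz
  rw [Complex.mem_slitPlane_iff]
  refine or_iff_not_imp_right.mpr fun him ↦ ?_
  have hconj_eq : φ (conj z) = φ z :=
    (hconj z hz).trans (Complex.conj_eq_iff_im.mpr (not_not.mp him))
  have hreal : (z.re : ℂ) = z :=
    Complex.conj_eq_iff_re.mp (hφ.injOn hf (show b < (conj z).re from hz) hz hconj_eq)
  exact hreal ▸ hpos z.re hz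

end IsLogInverse

theorem antitoneOn_div_pow_of_hasDerivAt_le {y y' : ℝ → ℝ} {n : ℕ}
    (hy : ∀ t > b, HasDerivAt y (y' t) t) (h : ∀ t > b, y' t ≤ n * y t / (t - b)) :
    AntitoneOn (fun t ↦ y t / (t - b) ^ n) (Ioi b) := by
  have hsub : ∀ t > b, 0 < t - b := fun t ht ↦ sub_pos.mpr ht
  have hderiv : ∀ t > b, HasDerivAt (fun t ↦ y t / (t - b) ^ n)
      ((y' t - n * y t / (t - b)) / (t - b) ^ n) t := by
    intro t ht
    have hne := (hsub t ht).ne'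
    convert! (hy t ht).div (((hasDerivAt_id t).sub_const b).fun_pow n) (pow_ne_zero n hne) using 1
    rcases n with _ | n
    · simp
    · simp only [id, Nat.add_sub_cancel, Nat.cast_add, Nat.cast_one, mul_one]
      field_simp
      ring
  refine antitoneOn_of_hasDerivWithinAt_nonpos (convex_Ioi b)
    (fun t ht ↦ (hderiv t ht).continuousAt.continuousWithinAt)
    (fun t ht ↦ (hderiv t (interior_subset ht)).hasDerivWithinAt) fun t ht ↦ ?_
  have ht : b < t := interior_subset ht
  exact div_nonpos_of_nonpos_of_nonneg (sub_nonpos.mpr (h t ht)) (pow_nonneg (hsub t ht).le n)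

theorem isLittleO_exp_of_hasDerivAt_le {y y' : ℝ → ℝ} {n : ℕ}
    (hy : ∀ t > b, HasDerivAt y (y' t) t) (hpos : ∀ t > b, 0 ≤ y t)
    (h : ∀ t > b, y' t ≤ n * y t / (t - b)) : y =o[atTop] Real.exp := by
  have hanti := antitoneOn_div_pow_of_hasDerivAt_le hy h
  have hpoly : y =O[atTop] fun t ↦ (t - b) ^ n := by
    refine Asymptotics.IsBigO.of_bound (y (b + 1) / (b + 1 - b) ^ n) ?_
    filter_upwards [eventually_ge_atTop (b + 1)] with t ht
    have hbt : b < t := (lt_add_one b).trans_le ht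
    have hpow : 0 < (t - b) ^ n := pow_pos (sub_pos.mpr hbt) n
    rw [Real.norm_of_nonneg (hpos t hbt), Real.norm_of_nonneg hpow.le, ← div_le_iff₀ hpow]
    exact hanti (lt_add_one b) hbt ht
  have hexp : (fun t ↦ (t - b) ^ n) =o[atTop] fun t ↦ Real.exp (t - b) :=
    (Real.isLittleO_pow_exp_atTop (n := n)).comp_tendsto
      (tendsto_atTop_add_const_right _ (-b) tendsto_id)
  refine (hpoly.trans_isLittleO hexp).trans_isBigO ?_
  simp only [Real.exp_sub, div_eq_inv_mul]
  exact Asymptotics.isBigO_const_mul_self _ _ _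

theorem atTop_le_map_of_continuousOn {y : ℝ → ℝ} (hy : ContinuousOn y (Ioi b))
    (htop : Tendsto y atTop atTop) : atTop ≤ map y atTop := by
  intro s hs
  obtain ⟨t, ht⟩ := mem_atTop_sets.mp (mem_map.mp hs)
  refine mem_of_superset (Ici_mem_atTop (y (max t (b + 1)))) ?_
  have hIci : Ici (max t (b + 1)) ⊆ Ioi b := fun u hu ↦
    (lt_add_one b).trans_le ((le_max_right _ _).trans hu)
  refine (isPreconnected_Ici.intermediate_value_Ici self_mem_Ici
    (le_principal_iff.mpr (Ici_mem_atTop _)) (hy.mono hIci) htop).trans ?_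
  rintro _ ⟨u, hu, rfl⟩
  exact ht u ((le_max_left _ _).trans hu)

theorem pos_of_isPreconnected_of_ne_zero {X : Type*} [TopologicalSpace X] {s : Set X} {g : X → ℝ}
    (hs : IsPreconnected s) (hg : ContinuousOn g s) (hne : ∀ x ∈ s, g x ≠ 0) {x y : X} (hx : x ∈ s)
    (hy : y ∈ s) (hpos : 0 < g x) : 0 < g y := by
  by_contra! hneg
  obtain ⟨z, hz, hz0⟩ := hs.intermediate_value hy hx hg ⟨hneg, hpos.le⟩
  exact hne z hz hz0

theorem ball_subset_rightHalfPlane (b : ℝ) (z : ℂ) : ball z (z.re - b) ⊆ rightHalfPlane b := by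
  intro w hw
  have hre := (Complex.abs_re_le_norm (w - z)).trans_lt (mem_ball_iff_norm.mp hw)
  rw [Complex.sub_re] at hre
  change b < w.re
  linarith [(abs_lt.mp hre).1]

namespace IsLogInverse

theorem norm_deriv_le (hφ : IsLogInverse f c b φ) (hf : Differentiable ℂ f)
    (hslit : MapsTo φ (rightHalfPlane b) Complex.slitPlane) (hz : z ∈ rightHalfPlane b) :
    ‖deriv φ z‖ ≤ 4 * ‖φ z‖ / (z.re - b) :=
  norm_deriv_le_of_mapsTo_slitPlane (sub_pos.mpr hz)
    ((hφ.differentiableOn hf).mono (ball_subset_rightHalfPlane b z))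
    (hslit.mono_left (ball_subset_rightHalfPlane b z))

theorem isLittleO_id (hφ : IsLogInverse f c b φ) (hf : Differentiable ℂ f)
    (hslit : MapsTo φ (rightHalfPlane b) Complex.slitPlane)
    (hreal : ∀ t > b, (φ (t : ℝ)).im = 0) : (fun x : ℝ ↦ x) =o[atTop] fun x : ℝ ↦ f x := by
  have hofReal : ∀ t > b, ((φ (t : ℝ)).re : ℂ) = φ t := fun t ht ↦
    Complex.conj_eq_iff_re.mp (Complex.conj_eq_iff_im.mpr (hreal t ht))
  have hpos : ∀ t > b, 0 < (φ (t : ℝ)).re := fun t ht ↦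
    (hslit (ofReal_mem_rightHalfPlane.mpr ht)).resolve_right (not_not.mpr (hreal t ht))
  have hnorm : ∀ t > b, ‖φ (t : ℝ)‖ = (φ (t : ℝ)).re := fun t ht ↦ by
    rw [← hofReal t ht, Complex.norm_of_nonneg (hpos t ht).le, Complex.ofReal_re]
  have hderiv : ∀ t > b, HasDerivAt (fun t : ℝ ↦ (φ t).re) (deriv φ t).re t := fun t ht ↦
    ((hφ.differentiableOn hf).differentiableAt ((isOpen_rightHalfPlane b).mem_nhds
      (ofReal_mem_rightHalfPlane.mpr ht))).hasDerivAt.real_of_complex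
  have hgrowth : ∀ t > b, (deriv φ (t : ℝ)).re ≤ (4 : ℕ) * (φ t).re / (t - b) := by
    intro t ht
    refine (Complex.re_le_norm _).trans ?_
    simpa [hnorm t ht] using hφ.norm_deriv_le hf hslit (ofReal_mem_rightHalfPlane.mpr ht)
  have htop : Tendsto (fun t : ℝ ↦ (φ t).re) atTop atTop := by
    refine (tendsto_norm_cobounded_atTop.comp (hφ.tendsto_cobounded hf.continuous)).congr' ?_
    filter_upwards [eventually_gt_atTop b] with t ht using hnorm t ht
  have hlittle : (fun t : ℝ ↦ (φ t).re) =o[atTop] fun t ↦ f (φ t) := by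
    refine (isLittleO_exp_of_hasDerivAt_le hderiv (fun t ht ↦ (hpos t ht).le) hgrowth).trans_isBigO
      (Asymptotics.IsBigO.of_bound ‖c‖⁻¹ ?_)
    filter_upwards [eventually_gt_atTop b] with t ht
    rw [hφ.norm_apply (ofReal_mem_rightHalfPlane.mpr ht), Complex.ofReal_re,
      inv_mul_cancel_left₀ (norm_ne_zero_iff.mpr hφ.ne_zero), Real.norm_eq_abs, Real.abs_exp]
  refine Asymptotics.IsLittleO.mono ?_ (atTop_le_map_of_continuousOn
    (fun t ht ↦ (hderiv t ht).continuousAt.continuousWithinAt) htop)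
  refine Asymptotics.isLittleO_map.mpr (hlittle.congr' (by rfl) ?_)
  filter_upwards [eventually_gt_atTop b] with t ht using congrArg f (hofReal t ht).symm

theorem re_pos (hφ : IsLogInverse f c b φ) (hreal : ∀ t > b, (φ (t : ℝ)).im = 0)
    (h0 : ‖f 0‖ ≤ ‖c‖ * Real.exp b) {s t : ℝ} (hs : b < s) (hpos : 0 < (φ s).re) (ht : b < t) :
    0 < (φ t).re := by
  refine pos_of_isPreconnected_of_ne_zero isPreconnected_Ioi (g := fun t : ℝ ↦ (φ t).re)
    (Complex.continuous_re.comp_continuousOn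
      (hφ.continuousOn.comp Complex.continuous_ofReal.continuousOn fun t ht ↦ ht))
    (fun t ht hre ↦ ?_) hs ht hpos
  have hφt : φ (t : ℝ) = 0 := Complex.ext hre (hreal t ht)
  refine (h0.trans_lt ?_).ne (congrArg (‖f ·‖) hφt).symm
  rw [hφ.norm_apply (ofReal_mem_rightHalfPlane.mpr ht), Complex.ofReal_re]
  exact mul_lt_mul_of_pos_left (Real.exp_lt_exp.mpr ht) (norm_pos_iff.mpr hφ.ne_zero)

end IsLogInverse

end LogInverse

section RealClassB

open Bornology

/-- The class `B_ℝ` of real transcendental entire functions with a bounded set of singular values;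
the boundedness is encoded as `f` being a covering over the exterior of some disc. -/
structure RealClassB (f : ℂ → ℂ) : Prop where
  transcendental : TranscendentalEntire f
  real : ∀ x : ℝ, (f x).im = 0
  covering : ∃ R, IsCoveringMapOn f {w | R < ‖w‖}

theorem IsSingularValueSet.realClassB {f : ℂ → ℂ} {S : Set ℂ} (hS : IsSingularValueSet f S)
    (hSbdd : IsBounded S) (hf : TranscendentalEntire f) (hreal : ∀ x : ℝ, (f x).im = 0) :
    RealClassB f := by
  obtain ⟨R, hR⟩ := hSbdd.exists_norm_le
  exact ⟨hf, hreal, R, hS.2.1.mono fun w hw hwS ↦ (hR w hwS).not_gt hw⟩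

theorem TranscendentalEntire.comp_mul_left {f : ℂ → ℂ} (hf : TranscendentalEntire f) {a : ℂ}
    (ha : a ≠ 0) : TranscendentalEntire fun z ↦ f (a * z) := by
  refine ⟨hf.1.comp (differentiable_id.const_mul a), fun ⟨p, hp⟩ ↦ hf.2 ?_⟩
  refine ⟨p.comp (Polynomial.C a⁻¹ * Polynomial.X), fun z ↦ ?_⟩
  simpa [mul_inv_cancel_left₀ ha] using hp (a⁻¹ * z)

/-- `f` maps the end `σ * ∞` of the real line to `τ * ∞`, at least doubling the modulus there. -/
def DoublesRay (f : ℂ → ℂ) (σ τ : ℝ) : Prop :=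
  ∀ᶠ x : ℝ in atTop, 2 * x ≤ τ * (f (σ * x)).re

theorem DoublesRay.target_unique {f : ℂ → ℂ} {σ τ τ' : ℝ} (h : DoublesRay f σ τ)
    (h' : DoublesRay f σ τ') (hτ : τ = 1 ∨ τ = -1) (hτ' : τ' = 1 ∨ τ' = -1) : τ = τ' := by
  obtain ⟨x, hx, hx', hpos⟩ := (h.and (h'.and (eventually_gt_atTop 0))).exists
  rcases hτ with rfl | rfl <;> rcases hτ' with rfl | rfl <;> first | rfl | linarith

namespace RealClassB

variable {f : ℂ → ℂ} {P : Set ℂ} {σ τ : ℝ}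

theorem comp_mul_left (hf : RealClassB f) (hσ : σ ≠ 0) : RealClassB fun z ↦ f (σ * z) := by
  have hσ' : (σ : ℂ) ≠ 0 := Complex.ofReal_ne_zero.mpr hσ
  obtain ⟨R, hR⟩ := hf.covering
  refine ⟨hf.transcendental.comp_mul_left hσ', fun x ↦ ?_, R,
    hR.comp_homeomorph (Homeomorph.mulLeft₀ (σ : ℂ) hσ')⟩
  exact_mod_cast hf.real (σ * x)

theorem ofReal_re_apply (hf : RealClassB f) (x : ℝ) : ((f x).re : ℂ) = f x :=
  Complex.ext rfl (hf.real x).symm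

theorem iterate_im_eq_zero (hf : RealClassB f) {z : ℂ} (hz : z.im = 0) (n : ℕ) :
    (f^[n] z).im = 0 := by
  refine MapsTo.iterate (s := {z : ℂ | z.im = 0}) (fun w hw ↦ ?_) n hz
  change (f w).im = 0
  simpa only [show (w.re : ℂ) = w from Complex.ext rfl hw.symm] using hf.real w.re

theorem exists_isLogInverse_of_not_isBoundedUnder (hf : RealClassB f)
    (h : ¬IsBoundedUnder (· ≤ ·) atTop fun x : ℝ ↦ ‖f x‖) :
    ∃ c b φ, IsLogInverse f c b φ ∧ (∀ z ∈ rightHalfPlane b, φ (conj z) = conj (φ z)) ∧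
      ∀ t > b, 0 < (φ (t : ℝ)).re := by
  obtain ⟨R, hR⟩ := hf.covering
  set r := max 1 (max R ‖f 0‖)
  have hr : 0 < r := lt_max_of_lt_left one_pos
  have hfreq : ∃ᶠ x : ℝ in atTop, r < ‖f x‖ := fun hle ↦
    h (isBoundedUnder_of_eventually_le (hle.mono fun _ ↦ le_of_not_gt))
  obtain ⟨x, hx, hxpos⟩ := (hfreq.and_eventually (eventually_gt_atTop 0)).exists
  have hfx : 0 < ‖f x‖ := hr.trans hx
  have hb : Real.log (r / ‖f x‖) < 0 :=
    Real.log_neg (div_pos hr hfx) ((div_lt_one hfx).mpr hx)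
  have hexp : ‖f x‖ * Real.exp (Real.log (r / ‖f x‖)) = r := by
    rw [Real.exp_log (div_pos hr hfx), mul_div_cancel₀ _ hfx.ne']
  obtain ⟨φ, hφ, hφ0⟩ := exists_isLogInverse hR (norm_pos_iff.mp hfx) hb
    (((le_max_left _ _).trans (le_max_right _ _)).trans_eq hexp.symm)
  have hconj : ∀ z ∈ rightHalfPlane _, φ (conj z) = conj (φ z) := fun z hz ↦
    hφ.apply_conj hf.transcendental.1 hf.real (Complex.conj_eq_iff_im.mpr (hf.real x)) hb
      (by simp [hφ0]) hz
  have hreal : ∀ t > Real.log (r / ‖f x‖), (φ (t : ℝ)).im = 0 := fun t ht ↦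
    Complex.conj_eq_iff_im.mp (by simpa using (hconj t ht).symm)
  refine ⟨f x, _, φ, hφ, hconj, fun t ht ↦ hφ.re_pos hreal ?_ hb (by simpa [hφ0]) ht⟩
  exact ((le_max_right _ _).trans (le_max_right _ _)).trans_eq hexp.symm

theorem isLittleO_id (hf : RealClassB f) (h : ¬IsBoundedUnder (· ≤ ·) atTop fun x : ℝ ↦ ‖f x‖) :
    (fun x : ℝ ↦ x) =o[atTop] fun x : ℝ ↦ f x := by
  obtain ⟨c, b, φ, hφ, hconj, hpos⟩ := hf.exists_isLogInverse_of_not_isBoundedUnder h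
  refine hφ.isLittleO_id hf.transcendental.1 (hφ.mapsTo_slitPlane hf.transcendental hconj hpos)
    fun t ht ↦ Complex.conj_eq_iff_im.mp ?_
  simpa using (hconj t ht).symm

theorem norm_apply (hf : RealClassB f) (x : ℝ) : ‖f x‖ = |(f x).re| := by
  rw [← Real.norm_eq_abs, ← Complex.norm_real, hf.ofReal_re_apply]

theorem eventually_two_mul_le_abs (hf : RealClassB f)
    (h : ¬IsBoundedUnder (· ≤ ·) atTop fun x : ℝ ↦ ‖f x‖) (hτ : τ ≠ 0) :
    ∀ᶠ x : ℝ in atTop, 2 * x ≤ |τ * (f x).re| := by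
  filter_upwards [(hf.isLittleO_id h).bound (half_pos (abs_pos.mpr hτ))] with x hx
  rw [hf.norm_apply, div_mul_eq_mul_div, le_div_iff₀' two_pos, ← abs_mul] at hx
  exact (mul_le_mul_of_nonneg_left (Real.le_norm_self x) two_pos.le).trans hx

theorem not_isBoundedUnder_of_tendsto (hf : RealClassB f) {u : ℕ → ℝ} (hu : Tendsto u atTop atTop)
    (hfu : Tendsto (fun j ↦ τ * (f (u j)).re) atTop atTop) :
    ¬IsBoundedUnder (· ≤ ·) atTop fun x : ℝ ↦ ‖f x‖ := by
  rintro ⟨C, hC⟩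
  obtain ⟨j, hj, hjC⟩ :=
    ((hu.eventually (eventually_map.mp hC)).and (hfu.eventually_gt_atTop (|τ| * C))).exists
  have hle : |τ * (f (u j)).re| ≤ |τ| * C := by
    rw [abs_mul, ← hf.norm_apply]
    exact mul_le_mul_of_nonneg_left hj (abs_nonneg τ)
  exact ((le_abs_self _).trans hle).not_gt hjC

theorem doublesRay_of_tendsto (hf : RealClassB f) (hσ : σ ≠ 0) (hτ : τ ≠ 0) {u : ℕ → ℝ}
    (hu : Tendsto u atTop atTop)
    (hfu : Tendsto (fun j ↦ τ * (f (σ * u j)).re) atTop atTop) : DoublesRay f σ τ := by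
  have hg := hf.comp_mul_left hσ
  obtain ⟨X, hX⟩ := eventually_atTop.mp
    ((hg.eventually_two_mul_le_abs (hg.not_isBoundedUnder_of_tendsto hu hfu) hτ).and
      (eventually_gt_atTop 0))
  obtain ⟨j, hj, hjX⟩ := ((hfu.eventually_gt_atTop 0).and (hu.eventually_ge_atTop X)).exists
  have hf' := hf.transcendental.1.continuous
  have hcont : Continuous fun x : ℝ ↦ τ * (f (σ * x)).re := by fun_prop
  filter_upwards [eventually_ge_atTop X] with x hx
  refine (hX x hx).1.trans_eq (abs_of_pos ?_)
  refine pos_of_isPreconnected_of_ne_zero isPreconnected_Ici hcont.continuousOn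
    (fun y hy ↦ abs_pos.mp ?_) hjX hx hj
  linarith [hX y hy]

end RealClassB

theorem exists_tendsto_sign_mul_atTop {y : ℕ → ℝ} (hy : Tendsto (fun j ↦ |y j|) atTop atTop) :
    ∃ σ : ℝ, (σ = 1 ∨ σ = -1) ∧ ∃ k : ℕ → ℕ,
      Tendsto k atTop atTop ∧ Tendsto (fun j ↦ σ * y (k j)) atTop atTop := by
  have hsign : ∃ᶠ j in atTop, |y j| = 1 * y j ∨ |y j| = -1 * y j :=
    Frequently.of_forall fun j ↦ by simpa only [one_mul, neg_one_mul] using abs_choice (y j)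
  obtain ⟨σ, hσ, hfreq⟩ : ∃ σ : ℝ, (σ = 1 ∨ σ = -1) ∧ ∃ᶠ j in atTop, |y j| = σ * y j := by
    rcases frequently_or_distrib.mp hsign with h | h
    · exact ⟨1, Or.inl rfl, h⟩
    · exact ⟨-1, Or.inr rfl, h⟩
  obtain ⟨k, hk, habs⟩ := extraction_of_frequently_atTop hfreq
  exact ⟨σ, hσ, k, hk.tendsto_atTop, (hy.comp hk.tendsto_atTop).congr habs⟩

/-- The set `Σ(f)`, for the orbits starting in an arbitrary set `P` in place of `S(f)`. -/
def sigmaSet (f : ℂ → ℂ) (P : Set ℂ) : Set ℝ := {σ | (σ = 1 ∨ σ = -1) ∧ MemSigma f P σ}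

theorem finite_sigmaSet (f : ℂ → ℂ) (P : Set ℂ) : (sigmaSet f P).Finite :=
  (toFinite {1, -1}).subset fun _ hσ ↦ hσ.1

/-- The union of the rays `σ * [M, ∞)` over `σ ∈ Σ(f)`, as a subset of `ℂ`. -/
def sigmaRays (f : ℂ → ℂ) (P : Set ℂ) (M : ℝ) : Set ℂ :=
  {z | z.im = 0 ∧ ∃ σ : ℝ, (σ = 1 ∨ σ = -1) ∧ MemSigma f P σ ∧ M ≤ σ * z.re}

theorem sign_mul_le_abs {σ : ℝ} (hσ : σ = 1 ∨ σ = -1) (x : ℝ) : σ * x ≤ |x| := by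
  refine (le_abs_self _).trans_eq ?_
  rw [abs_mul, (abs_eq zero_le_one).mpr hσ, one_mul]

theorem subset_escapingSet_of_mapsTo {f : ℂ → ℂ} {A : Set ℂ} {c : ℝ} (hA : MapsTo f A A)
    (h0 : (0 : ℂ) ∉ A) (hc : 1 < c) (h : ∀ z ∈ A, c * ‖z‖ ≤ ‖f z‖) : A ⊆ EscapingSet f := by
  intro z hz
  refine tendsto_atTop_of_geom_le (norm_pos_iff.mpr (ne_of_mem_of_not_mem hz h0)) hc fun n ↦ ?_
  rw [Function.iterate_succ_apply']
  exact h _ (hA.iterate n hz)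

namespace RealClassB

theorem exists_tendsto_of_memSigma (hf : RealClassB f) (hσ : σ = 1 ∨ σ = -1)
    (h : MemSigma f P σ) :
    ∃ s ∈ P, s.im = 0 ∧ ∃ m : ℕ → ℕ, Tendsto m atTop atTop ∧
      Tendsto (fun j ↦ |(f^[m j] s).re|) atTop atTop ∧
      Tendsto (fun j ↦ σ * (f (f^[m j] s).re).re) atTop atTop := by
  obtain ⟨s, hsP, hs, n, hn, hlim⟩ := h
  have hofReal : ∀ m, ((f^[m] s).re : ℂ) = f^[m] s := fun m ↦
    Complex.ext rfl (hf.iterate_im_eq_zero hs m).symm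
  have hlim' : Tendsto (fun j ↦ σ * (f (f^[n j - 1] s).re).re) atTop atTop := by
    refine hlim.congr' ?_
    filter_upwards [hn.eventually_ge_atTop 1] with j hj
    rw [hofReal, ← Function.iterate_succ_apply' f, Nat.succ_eq_add_one, Nat.sub_add_cancel hj]
  refine ⟨s, hsP, hs, fun j ↦ n j - 1, (tendsto_sub_atTop_nat 1).comp hn, ?_, hlim'⟩
  have hcob : Tendsto (fun j ↦ f ((f^[n j - 1] s).re : ℝ)) atTop (cobounded ℂ) := by
    refine tendsto_norm_atTop_iff_cobounded.mp (tendsto_atTop_mono (fun j ↦ ?_) hlim')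
    exact (sign_mul_le_abs hσ _).trans_eq (hf.norm_apply _).symm
  exact tendsto_norm_atTop_iff_cobounded.mpr (tendsto_cobounded_of_comp
    (hf.transcendental.1.continuous.comp Complex.continuous_ofReal) hcob)

theorem exists_doublesRay_of_target (hf : RealClassB f) (hσ : σ ∈ sigmaSet f P) :
    ∃ σ' ∈ sigmaSet f P, DoublesRay f σ' σ := by
  obtain ⟨s, hsP, hs, m, hm, habs, hlim⟩ := hf.exists_tendsto_of_memSigma hσ.1 hσ.2
  obtain ⟨σ', hσ', k, hk, hlim'⟩ := exists_tendsto_sign_mul_atTop habs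
  have hne : ∀ {τ : ℝ}, τ = 1 ∨ τ = -1 → τ ≠ 0 := fun hτ ↦
    left_ne_zero_of_mul_eq_one (mul_self_eq_one_iff.mpr hτ)
  refine ⟨σ', ⟨hσ', s, hsP, hs, fun j ↦ m (k j), hm.comp hk, hlim'⟩,
    hf.doublesRay_of_tendsto (hne hσ') (hne hσ.1) hlim' ((hlim.comp hk).congr fun j ↦ ?_)⟩
  rw [← Complex.ofReal_mul, ← mul_assoc, mul_self_eq_one_iff.mpr hσ', one_mul]
  rfl

/-- Choosing a source for each end in `Σ(f)` is injective, since an end has only one target; as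
`Σ(f)` is finite, every end is then a chosen source. -/
theorem exists_doublesRay (hf : RealClassB f) (hσ : σ ∈ sigmaSet f P) :
    ∃ τ ∈ sigmaSet f P, DoublesRay f σ τ := by
  choose source hsource hdoubles using fun τ : sigmaSet f P ↦ hf.exists_doublesRay_of_target τ.2
  have hinj : Function.Injective fun τ ↦ (⟨source τ, hsource τ⟩ : sigmaSet f P) := by
    intro τ τ' heq
    have hsame : source τ = source τ' := congrArg Subtype.val heq
    exact Subtype.ext ((hdoubles τ).target_unique (hsame ▸ hdoubles τ') τ.2.1 τ'.2.1)
  have : Finite (sigmaSet f P) := finite_sigmaSet f P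
  obtain ⟨τ, hτ⟩ := Finite.surjective_of_injective hinj ⟨σ, hσ⟩
  have hsource_eq : source τ = σ := congrArg Subtype.val hτ
  exact ⟨τ, τ.2, hsource_eq ▸ hdoubles τ⟩

theorem mem_sigmaRays_and_two_mul_norm_le (hf : RealClassB f) {M : ℝ} (hM : 0 ≤ M)
    (hdoubles : ∀ x ≥ M, ∀ σ ∈ sigmaSet f P, ∃ τ ∈ sigmaSet f P, 2 * x ≤ τ * (f (σ * x)).re)
    {z : ℂ} (hz : z ∈ sigmaRays f P M) : f z ∈ sigmaRays f P M ∧ 2 * ‖z‖ ≤ ‖f z‖ := by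
  obtain ⟨him, σ, hσ, hmem, hMz⟩ := hz
  obtain ⟨τ, hτ, hle⟩ := hdoubles _ hMz σ ⟨hσ, hmem⟩
  obtain ⟨x, rfl⟩ : ∃ x : ℝ, (x : ℂ) = z := ⟨z.re, Complex.ext rfl him.symm⟩
  simp only [Complex.ofReal_re] at hle hMz
  rw [← Complex.ofReal_mul, ← mul_assoc σ, mul_self_eq_one_iff.mpr hσ, one_mul] at hle
  have hnorm : ‖(x : ℂ)‖ = σ * x := by
    rw [Complex.norm_real, Real.norm_eq_abs, ← abs_of_nonneg (hM.trans hMz), abs_mul,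
      (abs_eq zero_le_one).mpr hσ, one_mul]
  refine ⟨⟨hf.real x, τ, hτ.1, hτ.2, by linarith⟩, ?_⟩
  rw [hnorm, hf.norm_apply]
  exact hle.trans (sign_mul_le_abs hτ.1 _)

end RealClassB

end RealClassB

theorem escaping_rays_general {f : ℂ → ℂ} (hf : RealClassB f) (P : Set ℂ) :
    ∃ M₀ : ℝ, 0 < M₀ ∧ ∀ M ≥ M₀,
      sigmaRays f P M ⊆ EscapingSet f ∧ f '' sigmaRays f P M ⊆ sigmaRays f P M := by
  have hdoubles : ∀ᶠ x : ℝ in atTop,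
      ∀ σ ∈ sigmaSet f P, ∃ τ ∈ sigmaSet f P, 2 * x ≤ τ * (f (σ * x)).re := by
    refine (eventually_all_finite (finite_sigmaSet f P)).mpr fun σ hσ ↦ ?_
    obtain ⟨τ, hτ, hστ⟩ := hf.exists_doublesRay hσ
    exact hστ.mono fun x hx ↦ ⟨τ, hτ, hx⟩
  obtain ⟨X, hX⟩ := eventually_atTop.mp hdoubles
  refine ⟨max X 1, lt_max_of_lt_right one_pos, fun M hM ↦ ?_⟩
  have hM0 : 0 < M := one_pos.trans_le ((le_max_right X 1).trans hM)
  have hstep : ∀ z ∈ sigmaRays f P M, f z ∈ sigmaRays f P M ∧ 2 * ‖z‖ ≤ ‖f z‖ := fun z ↦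
    hf.mem_sigmaRays_and_two_mul_norm_le hM0.le fun x hx ↦
      hX x ((le_max_left X 1).trans (hM.trans hx))
  have hmaps : MapsTo f (sigmaRays f P M) (sigmaRays f P M) := fun z hz ↦ (hstep z hz).1
  have h0 : (0 : ℂ) ∉ sigmaRays f P M := by
    rintro ⟨-, σ, -, -, hMσ⟩
    exact hM0.not_ge (by simpa using hMσ)
  exact ⟨subset_escapingSet_of_mapsTo hmaps h0 one_lt_two fun z hz ↦ (hstep z hz).2,
    hmaps.image_subset⟩

/-- **Theorem (Statement 10).** For `f ∈ B_ℝ` and all sufficiently large `M > 0`, the set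
`A = ⋃_{σ ∈ Σ(f)} σ·[M,∞)` satisfies `A ⊆ I(f)` and `f(A) ⊆ A`. -/
theorem escaping_rays
    (f : ℂ → ℂ) (S : Set ℂ)
    (hf : TranscendentalEntire f)
    (hS : IsSingularValueSet f S)
    (hSbdd : Bornology.IsBounded S)
    (hreal : f '' {z : ℂ | z.im = 0} ⊆ {z : ℂ | z.im = 0}) :
    ∃ M₀ : ℝ, 0 < M₀ ∧ ∀ M ≥ M₀, ∀ A : Set ℂ,
      A = {z : ℂ | z.im = 0 ∧ ∃ σ : ℝ, (σ = 1 ∨ σ = -1) ∧ MemSigma f S σ ∧ M ≤ σ * z.re} →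
      A ⊆ EscapingSet f ∧ f '' A ⊆ A := by
  obtain ⟨M₀, hM₀, h⟩ := escaping_rays_general
    (hS.realClassB hSbdd hf fun x ↦ hreal ⟨x, Complex.ofReal_im x, rfl⟩) S
  exact ⟨M₀, hM₀, fun M hM A hA ↦ hA ▸ h M hM⟩
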